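/- Let F be an algebraically closed field, f ∈ F⟨X_1,…,X_m⟩, and k ≥ 1 such that f is noncentral on M_k(F). Let n ≥ k, let Y_1,…,Y_m be generic n×n matrices over F, and let α_1,…,α_n be the roots (with multiplicity) of the characteristic polynomial of f(Y_1,…,Y_m) in an algebraic closure Ω of K = Frac(R). Then there is a subset S ⊆ {1,…,n} with |S| ≥ n − k such that the family (α_i)_{i ∈ S} is algebraically independent over F. -/

import Mathlib

/-!
Let `Y` be the family of generic `n × n` matrices, `P n` the characteristic polynomial of `f(Y)`
and `c` the constant term of `f`. Replacing the last row and column of every generic matrix by zero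
specializes `P (n + 1)` to `P n * (X - c)`. This specialization extends to the integral closure of
the coefficient ring in `Ω`, so independent roots of `P n` lift to independent roots of `P (n + 1)`,
and some further root `y` specializes to `c`. If `y ≠ c`, then `y` is transcendental over the
lifted roots, because specialization is injective on the algebra they generate; this gains one
independent root for each `n ≥ k`.

That `c` is not an eigenvalue of `f(Y)` amounts to `det g(Y) ≠ 0` for `g = f - c`, where
`g(Y) ≠ 0`. Replacing the entry `x a b` of each generic matrix by `x a b * X ^ w`, with `w`
congruent to `b - a` modulo `n`, makes `g(Y)` homogeneous for a grading by `ZMod n` while it stays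
equivariant under cyclic shifts of the indices. Its top coefficient in `X` is then a monomial
matrix.
-/

open Polynomial

universe u v

section Specialization

theorem transcendental_of_map_eq {A B K : Type*} [CommRing A] [CommRing B] [IsDomain B]
    [Algebra A B] [CommRing K] (Φ : B →+* K) (hΦ : Function.Injective (Φ.comp (algebraMap A B)))
    {y : B} {c : A} (hy : Φ y = Φ (algebraMap A B c)) (hyc : y ≠ algebraMap A B c) :
    Transcendental A y := by
  rintro ⟨p, hp, hpy⟩
  obtain ⟨q, hpq, hq⟩ := p.exists_eq_pow_rootMultiplicity_mul_and_not_dvd hp c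
  have hqy : aeval y q = 0 := by
    rw [hpq, map_mul, map_pow, map_sub, aeval_X, aeval_C] at hpy
    exact (mul_eq_zero.mp hpy).resolve_left (pow_ne_zero _ (sub_ne_zero.mpr hyc))
  have hqc : Φ.comp (algebraMap A B) (q.eval c) = 0 := by
    rw [RingHom.comp_apply, ← aeval_algebraMap_apply_eq_algebraMap_eval, aeval_def, hom_eval₂,
      ← hy, ← hom_eval₂, ← aeval_def, hqy, map_zero]
  exact hq (dvd_iff_isRoot.mpr (hΦ (hqc.trans (map_zero _).symm)))

theorem algebraicIndependent_option_of_map {F B K ι : Type*} [CommRing F] [CommRing B] [IsDomain B]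
    [Algebra F B] [CommRing K] [Algebra F K] (Φ : B →ₐ[F] K) {x : ι → B}
    (hx : AlgebraicIndependent F (Φ ∘ x)) {y : B} {c : F} (hy : Φ y = algebraMap F K c)
    (hyc : y ≠ algebraMap F B c) :
    AlgebraicIndependent F fun o : Option ι => o.elim y x := by
  rw [(hx.of_comp Φ).option_iff_transcendental]
  refine transcendental_of_map_eq (Φ : B →+* K) (c := algebraMap F _ c) ?_ ?_ ?_
  · rintro ⟨a, ha⟩ ⟨b, hb⟩ (hab : Φ a = Φ b)
    rw [Algebra.adjoin_range_eq_range_aeval] at ha hb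
    obtain ⟨p, rfl⟩ := ha
    obtain ⟨q, rfl⟩ := hb
    have hpq : p = q := hx <| by
      simpa only [Function.comp_def, ← MvPolynomial.comp_aeval_apply, AlgHom.toRingHom_eq_coe,
        RingHom.coe_coe] using hab
    rw [Subtype.mk.injEq, hpq]
  · exact hy.trans (Φ.commutes c).symm
  · exact hyc

theorem nonempty_algHom_of_isIntegral {R B K : Type*} [CommRing R] [CommRing B] [IsDomain B]
    [Algebra R B] [FaithfulSMul R B] [Algebra.IsIntegral R B] [Field K] [IsAlgClosed K]
    [Algebra R K] : Nonempty (B →ₐ[R] K) := by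
  let p := RingHom.ker (algebraMap R K)
  have : p.IsPrime := RingHom.ker_isPrime _
  obtain ⟨Q, hQ, hQp⟩ := Ideal.exists_ideal_over_prime_of_isIntegral_of_isDomain (S := B) p <| by
    rw [(RingHom.injective_iff_ker_eq_bot _).mp (FaithfulSMul.algebraMap_injective R B)]
    exact bot_le
  have : Q.LiesOver p := ⟨hQp.symm⟩
  let : Algebra (R ⧸ p) K := (RingHom.kerLift (algebraMap R K)).toAlgebra
  have : Module.IsTorsionFree (R ⧸ p) K :=
    Module.isTorsionFree_iff_algebraMap_injective.mpr (RingHom.kerLift_injective _)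
  have : Module.IsTorsionFree (R ⧸ p) (B ⧸ Q) :=
    Module.isTorsionFree_iff_faithfulSMul.mpr inferInstance
  have : IsScalarTower R (R ⧸ p) K := .of_algebraMap_eq fun _ => rfl
  let Ψ : B ⧸ Q →ₐ[R ⧸ p] K := IsAlgClosed.lift
  exact ⟨(Ψ.restrictScalars R).comp (Ideal.Quotient.mkₐ R Q)⟩

/-- `P` has at least `d` roots in `Ω` that are algebraically independent over `F`. -/
def HasIndependentRoots (F : Type*) {R : Type*} (Ω : Type*) [CommRing F] [CommRing R] [CommRing Ω]
    [IsDomain Ω] [Algebra F Ω] [Algebra R Ω] (P : R[X]) (d : ℕ) : Prop :=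
  ∃ x : Fin d → Ω, AlgebraicIndependent F x ∧ ∀ i, x i ∈ P.rootSet Ω

theorem hasIndependentRoots_zero (F : Type*) {R : Type*} (Ω : Type*) [CommRing F] [CommRing R]
    [CommRing Ω] [IsDomain Ω] [Algebra F Ω] [FaithfulSMul F Ω] [Algebra R Ω] (P : R[X]) :
    HasIndependentRoots F Ω P 0 :=
  ⟨Fin.elim0, algebraicIndependent_empty_type_iff.mpr (FaithfulSMul.algebraMap_injective F Ω),
    fun i => i.elim0⟩

theorem HasIndependentRoots.exists_finset {F R Ω ι : Type*} [CommRing F] [CommRing R] [CommRing Ω]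
    [IsDomain Ω] [Algebra F Ω] [Algebra R Ω] {P : R[X]} {d : ℕ}
    (hd : HasIndependentRoots F Ω P d) [Fintype ι] {α : ι → Ω}
    (hα : P.map (algebraMap R Ω) = ∏ i, (X - C (α i))) :
    ∃ S : Finset ι, S.card = d ∧ AlgebraicIndependent F fun i : S => α i := by
  obtain ⟨x, hx, hxP⟩ := hd
  have hroot (j : Fin d) : ∃ i, α i = x j := by
    have h0 := aeval_eq_zero_of_mem_rootSet (hxP j)
    rw [aeval_def, ← eval_map, hα, eval_prod, Finset.prod_eq_zero_iff] at h0
    obtain ⟨i, -, hi⟩ := h0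
    exact ⟨i, by simpa [sub_eq_zero, eq_comm] using hi⟩
  choose i hi using hroot
  have hαi : α ∘ i = x := funext hi
  have : Nontrivial F := (algebraMap F Ω).domain_nontrivial
  have hinj : Function.Injective i := .of_comp (f := α) (hαi ▸ hx.injective)
  let S : Finset ι := Finset.univ.map ⟨i, hinj⟩
  choose j hj using show ∀ s : S, ∃ j, i j = s from fun s => by
    obtain ⟨j, -, hj⟩ := Finset.mem_map.mp s.2
    exact ⟨j, hj⟩
  have hxj : x ∘ j = fun s : S => α s := funext fun s => by rw [← hαi, ← hj s]; rfl
  exact ⟨S, by simp [S], hxj ▸ hx.comp j fun s t hst => Subtype.ext (by rw [← hj, ← hj, hst])⟩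

theorem splits_integralClosure {R Ω : Type*} [CommRing R] [CommRing Ω] [IsDomain Ω] [Algebra R Ω]
    {P : R[X]} (hP : P.Monic) (hs : (P.map (algebraMap R Ω)).Splits) :
    (P.map (algebraMap R (integralClosure R Ω))).Splits := by
  have hmap : (P.map (algebraMap R (integralClosure R Ω))).map
      (algebraMap (integralClosure R Ω) Ω) = P.map (algebraMap R Ω) := by
    rw [map_map, ← IsScalarTower.algebraMap_eq]
  refine .of_splits_map_of_injective (i := algebraMap (integralClosure R Ω) Ω)
    Subtype.val_injective (hmap.symm ▸ hs) fun y hy => ?_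
  rw [hmap, mem_roots (hP.map _).ne_zero, IsRoot, eval_map] at hy
  exact ⟨⟨y, P, hP, hy⟩, rfl⟩

theorem HasIndependentRoots.succ_of_specialization {F R Ω K : Type*} [CommRing F] [CommRing R]
    [CommRing Ω] [IsDomain Ω] [Field K] [IsAlgClosed K] [Algebra F R] [Algebra F Ω] [Algebra F K]
    [Algebra R Ω] [Algebra R K] [IsScalarTower F R Ω] [IsScalarTower F R K] [FaithfulSMul R Ω]
    {P : R[X]} (hP : P.Monic) (hs : (P.map (algebraMap R Ω)).Splits) {d : ℕ}
    (hd : HasIndependentRoots F K P d) {c : F} (hcK : algebraMap F K c ∈ P.rootSet K)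
    (hc : P.eval (algebraMap F R c) ≠ 0) :
    HasIndependentRoots F Ω P (d + 1) := by
  obtain ⟨x, hx, hxP⟩ := hd
  let B := integralClosure R Ω
  have : FaithfulSMul R B := .tower_bot R B Ω
  obtain ⟨Φ⟩ := nonempty_algHom_of_isIntegral (R := R) (B := B) (K := K)
  have hlift : Φ '' P.rootSet B = P.rootSet K :=
    (splits_integralClosure hP hs).image_rootSet_of_map_ne_zero Φ (hP.map _).ne_zero
  choose z hzP hzx using fun i => hlift.ge (hxP i)
  obtain ⟨y, hyP, hyc⟩ := hlift.ge hcK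
  have hne : y ≠ algebraMap F B c := by
    rintro rfl
    have hPc := aeval_eq_zero_of_mem_rootSet hyP
    rw [IsScalarTower.algebraMap_apply F R B, aeval_algebraMap_apply_eq_algebraMap_eval,
      map_eq_zero_iff _ (FaithfulSMul.algebraMap_injective R B)] at hPc
    exact hc hPc
  have hzx' : (Φ.restrictScalars F) ∘ z = x := funext hzx
  have hind := algebraicIndependent_option_of_map (Φ.restrictScalars F) (hzx' ▸ hx) hyc hne
  let ψ : B →ₐ[R] Ω := (integralClosure R Ω).val
  have hψ : ψ '' P.rootSet B = P.rootSet Ω :=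
    (splits_integralClosure hP hs).image_rootSet_of_map_ne_zero ψ (hP.map _).ne_zero
  have hindFin := (algebraicIndependent_equiv (finSuccEquiv d)).mpr hind
  refine ⟨_, hindFin.map' (f := ψ.restrictScalars F) Subtype.val_injective,
    fun i => hψ.le ⟨_, ?_, rfl⟩⟩
  cases h : finSuccEquiv d i <;> simp only [Function.comp_apply, h]
  exacts [hyP, hzP _]

end Specialization

section GradedMatrices

theorem coeff_det_of_natDegree_le {n R : Type*} [Fintype n] [DecidableEq n] [CommRing R]
    {M : Matrix n n R[X]} {d : ℕ} (hM : ∀ i j, (M i j).natDegree ≤ d) :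
    M.det.coeff (Fintype.card n * d) = (M.map (coeff · d)).det := by
  simp only [Matrix.det_apply, finsetSum_coeff, coeff_smul, Matrix.map_apply]
  refine Finset.sum_congr rfl fun σ _ => ?_
  rw [← Finset.card_univ, coeff_prod_of_natDegree_le _ _ d fun i _ => hM _ _]

theorem det_ne_zero_of_apply_ne_zero_iff {n R : Type*} [Fintype n] [DecidableEq n] [CommRing R]
    [IsDomain R] {M : Matrix n n R} (σ : Equiv.Perm n) (hM : ∀ i j, M i j ≠ 0 ↔ j = σ i) :
    M.det ≠ 0 := by
  have hdiag : M.submatrix id σ = Matrix.diagonal fun i => M i (σ i) := by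
    ext i j
    by_cases hij : i = j
    · simp [hij]
    · simpa [hij] using mt (hM i (σ j)).mp (mt σ.injective.eq_iff.mp (Ne.symm hij))
  have hdet : Equiv.Perm.sign σ * M.det ≠ 0 := by
    rw [← Matrix.det_permute', hdiag, Matrix.det_diagonal, Finset.prod_ne_zero_iff]
    exact fun i _ => (hM i _).mpr rfl
  exact right_ne_zero_of_mul hdet

/-- The polynomial matrices indexed by `G` in which the coefficient of `X ^ d` is supported on the
entries `(a, a + d • g)`. For abelian `G` this is the degree zero part of the grading where `X` has
degree `g` and the matrix unit at `(a, b)` has degree `a - b`. -/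
def gradedMatrices (R : Type*) {G : Type*} [CommRing R] [AddMonoid G] [Fintype G] [DecidableEq G]
    (g : G) : Subalgebra R (Matrix G G R[X]) where
  carrier := {M | ∀ a b d, (M a b).coeff d ≠ 0 → a + d • g = b}
  mul_mem' {M N} hM hN a c d h := by
    simp only [Matrix.mul_apply, finsetSum_coeff, coeff_mul] at h
    obtain ⟨b, -, hb⟩ := Finset.exists_ne_zero_of_sum_ne_zero h
    obtain ⟨⟨i, j⟩, hij, hne⟩ := Finset.exists_ne_zero_of_sum_ne_zero hb
    rw [← Finset.HasAntidiagonal.mem_antidiagonal.mp hij, add_nsmul, ← add_assoc,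
      hM a b i (left_ne_zero_of_mul hne), hN b c j (right_ne_zero_of_mul hne)]
  add_mem' {M N} hM hN a b d h := by
    by_cases hMd : (M a b).coeff d = 0
    · exact hN a b d fun hNd => h (by rw [Matrix.add_apply, coeff_add, hMd, hNd, add_zero])
    · exact hM a b d hMd
  algebraMap_mem' r a b d h := by
    rw [Matrix.algebraMap_matrix_apply, algebraMap_eq] at h
    split_ifs at h with hab
    · rw [coeff_C] at h
      rw [(ite_ne_right_iff.mp h).1, zero_nsmul, add_zero, hab]
    · exact absurd (coeff_zero d) h

theorem det_ne_zero_of_mem_gradedMatrices {R G : Type*} [CommRing R] [IsDomain R] [AddGroup G]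
    [Fintype G] [DecidableEq G] {g : G} {M : Matrix G G R[X]} (hM : M ∈ gradedMatrices R g)
    (σ : G → R →+* R) (hσ : ∀ s, Function.Injective (σ s))
    (hMσ : ∀ s a b, M (s + a) (s + b) = (M a b).map (σ s)) (hM0 : M ≠ 0) : M.det ≠ 0 := by
  obtain ⟨⟨a, b⟩, hab⟩ := Finite.exists_max fun t : G × G => (M t.1 t.2).degree
  have hab0 : M a b ≠ 0 := by
    contrapose! hM0
    ext1 i j
    simpa [hM0] using hab (i, j)
  let d := (M a b).natDegree
  have hd : (M a b).coeff d ≠ 0 := leadingCoeff_ne_zero.mpr hab0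
  have hsupp (i j : G) : (M.map (coeff · d)) i j ≠ 0 ↔ j = Equiv.addRight (d • g) i := by
    refine ⟨fun h => (hM i j d h).symm, ?_⟩
    rintro rfl
    have hshift := hMσ (i - a) a b
    rw [sub_add_cancel, ← hM a b d hd, ← add_assoc, sub_add_cancel] at hshift
    rw [Matrix.map_apply, Equiv.coe_addRight, hshift, hM a b d hd, coeff_map]
    exact (map_ne_zero_iff _ (hσ _)).mpr hd
  intro hdet
  refine det_ne_zero_of_apply_ne_zero_iff _ hsupp ?_
  rw [← coeff_det_of_natDegree_le fun i j => natDegree_le_natDegree (hab (i, j)), hdet, coeff_zero]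

end GradedMatrices

section FreeAlgebraLift

variable {F ι A B : Type*} [CommSemiring F] [Semiring A] [Algebra F A] [Semiring B] [Algebra F B]

theorem map_freeAlgebra_lift (φ : A →ₐ[F] B) (a : ι → A) (f : FreeAlgebra F ι) :
    φ (FreeAlgebra.lift F a f) = FreeAlgebra.lift F (φ ∘ a) f := by
  have h : φ.comp (FreeAlgebra.lift F a) = FreeAlgebra.lift F (φ ∘ a) :=
    (FreeAlgebra.lift_unique _ _).mp (by ext; simp)
  exact DFunLike.congr_fun h f

theorem freeAlgebra_lift_mem {S : Subalgebra F A} {a : ι → A} (ha : ∀ i, a i ∈ S)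
    (f : FreeAlgebra F ι) : FreeAlgebra.lift F a f ∈ S := by
  have hf : FreeAlgebra.lift F a f ∈ Algebra.adjoin F (Set.range a) := by
    rw [Algebra.adjoin_range_eq_range_freeAlgebra_lift]
    exact ⟨f, rfl⟩
  exact Algebra.adjoin_le (Set.range_subset_iff.mpr ha) hf

theorem freeAlgebra_lift_apply_equiv {m n : Type*} [Fintype m] [DecidableEq m] [Fintype n]
    [DecidableEq n] (φ : A →ₐ[F] B) (e : m ≃ n) {a : ι → Matrix m m A} {b : ι → Matrix n n B}
    (h : ∀ ℓ i j, b ℓ (e i) (e j) = φ (a ℓ i j)) (f : FreeAlgebra F ι) (i j : m) :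
    FreeAlgebra.lift F b f (e i) (e j) = φ (FreeAlgebra.lift F a f i j) := by
  have hab : (Matrix.reindexAlgEquiv F B e.symm) ∘ b = φ.mapMatrix ∘ a := by
    ext ℓ i j
    exact h ℓ i j
  have hf := map_freeAlgebra_lift (Matrix.reindexAlgEquiv F B e.symm).toAlgHom b f
  rw [AlgEquiv.coe_toAlgHom, hab, ← map_freeAlgebra_lift] at hf
  exact congr_fun₂ hf i j

theorem freeAlgebra_lift_fromBlocks_zero {p q : Type*} [Fintype p] [DecidableEq p] [Fintype q]
    [DecidableEq q] (a : ι → Matrix p p A) (f : FreeAlgebra F ι) :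
    FreeAlgebra.lift F (fun i => Matrix.fromBlocks (a i) 0 0 (0 : Matrix q q A)) f =
      Matrix.fromBlocks (FreeAlgebra.lift F a f) 0 0 (algebraMap F _ f.algebraMapInv) := by
  induction f using FreeAlgebra.induction with
  | grade0 r =>
    rw [AlgHom.commutes, AlgHom.commutes, FreeAlgebra.algebraMap_leftInverse]
    simp only [Algebra.algebraMap_eq_smul_one, ← Matrix.fromBlocks_one, Matrix.fromBlocks_smul,
      smul_zero]
  | grade1 i => simp [FreeAlgebra.algebraMapInv]
  | mul f g hf hg => simp [hf, hg, Matrix.fromBlocks_multiply]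
  | add f g hf hg => simp [hf, hg, Matrix.fromBlocks_add]

end FreeAlgebraLift

section GenericMatrices

/-- The polynomial ring in the entries of a family of generic `n × n` matrices indexed by `ι`:
the variable `(ℓ, i, j)` is the `(i, j)` entry of the `ℓ`-th matrix. -/
abbrev GenericEntries (F ι n : Type*) [CommRing F] : Type _ :=
  MvPolynomial (ι × n × n) F

/-- The `ℓ`-th generic `n × n` matrix. -/
noncomputable def genericMatrix (F : Type*) {ι : Type*} (n : Type*) [CommRing F] (ℓ : ι) :
    Matrix n n (GenericEntries F ι n) :=
  Matrix.of fun i j => MvPolynomial.X (ℓ, i, j)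

/-- Evaluation of noncommutative polynomials at the generic `n × n` matrices. -/
noncomputable def genericEval (F ι n : Type*) [CommRing F] [Fintype n] [DecidableEq n] :
    FreeAlgebra F ι →ₐ[F] Matrix n n (GenericEntries F ι n) :=
  FreeAlgebra.lift F (genericMatrix F n)

/-- The specialization of the entries of the generic `n × n` matrices to those of the
matrices `a ℓ`. -/
noncomputable def genericSpecialize {F ι n A : Type*} [CommRing F] [CommRing A] [Algebra F A]
    (a : ι → Matrix n n A) : GenericEntries F ι n →ₐ[F] A :=
  MvPolynomial.aeval fun t => a t.1 t.2.1 t.2.2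

variable {F ι n : Type*} [CommRing F] [Fintype n] [DecidableEq n]

theorem mapMatrix_genericSpecialize_genericEval {A : Type*} [CommRing A] [Algebra F A]
    (a : ι → Matrix n n A) (f : FreeAlgebra F ι) :
    (genericSpecialize a).mapMatrix (genericEval F ι n f) = FreeAlgebra.lift F a f := by
  rw [genericEval, map_freeAlgebra_lift]
  congr 2
  ext ℓ i j
  simp [genericSpecialize, genericMatrix]

theorem det_genericEval_ne_zero {G : Type*} [IsDomain F] [AddGroup G] [IsAddCyclic G] [Fintype G]
    [DecidableEq G] {f : FreeAlgebra F ι} (hf : genericEval F ι G f ≠ 0) :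
    (genericEval F ι G f).det ≠ 0 := by
  obtain ⟨g, hg⟩ := IsAddCyclic.exists_addMonoid_generator (α := G)
  choose w hw using show ∀ x, ∃ d : ℕ, d • g = x from hg
  let N (ℓ : ι) : Matrix G G (GenericEntries F ι G)[X] :=
    Matrix.of fun a b => C (MvPolynomial.X (ℓ, a, b)) * X ^ w (-a + b)
  let shift (s : G) (t : ι × G × G) : ι × G × G := (t.1, s + t.2.1, s + t.2.2)
  have hN : FreeAlgebra.lift F N f ∈ gradedMatrices _ g := by
    refine freeAlgebra_lift_mem (S := (gradedMatrices _ g).restrictScalars F)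
      (fun ℓ a b d h => ?_) f
    simp only [N, Matrix.of_apply, coeff_C_mul_X_pow] at h
    rw [(ite_ne_right_iff.mp h).1, hw, add_neg_cancel_left]
  have hNshift (s a b : G) : FreeAlgebra.lift F N f (s + a) (s + b) =
      (FreeAlgebra.lift F N f a b).map (MvPolynomial.rename (shift s) : _ →ₐ[F] _).toRingHom := by
    refine freeAlgebra_lift_apply_equiv (mapAlgHom (MvPolynomial.rename (shift s)))
      (Equiv.addLeft s) (fun ℓ i j => ?_) f a b
    simp [N, shift, add_assoc]
  have hN0 : FreeAlgebra.lift F N f ≠ 0 := by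
    contrapose! hf
    let ev : (GenericEntries F ι G)[X] →ₐ[F] GenericEntries F ι G :=
      (aeval 1).restrictScalars F
    rw [← map_zero ev.mapMatrix, ← hf, map_freeAlgebra_lift, genericEval]
    congr 2
    ext ℓ i j
    simp [N, ev, genericMatrix]
  have hdet := det_ne_zero_of_mem_gradedMatrices hN _
    (fun s => MvPolynomial.rename_injective (shift s) fun t u h => ?_) hNshift hN0
  · rw [← mapMatrix_genericSpecialize_genericEval, ← AlgHom.map_det] at hdet
    exact ne_zero_of_map hdet
  · simpa [shift, Prod.ext_iff] using h

end GenericMatrices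

section IndependentEigenvalues

variable {F ι p n A : Type*} [CommRing F] [Fintype p] [DecidableEq p] [Fintype n] [DecidableEq n]
  [CommRing A] [Algebra F A]

theorem exists_mapMatrix_genericEval_eq_reindex {q : Type*} [Fintype q] [DecidableEq q]
    (e : p ⊕ q ≃ n) (a : ι → Matrix p p A) (f : FreeAlgebra F ι) :
    ∃ φ : GenericEntries F ι n →ₐ[F] A, φ.mapMatrix (genericEval F ι n f) =
      Matrix.reindexAlgEquiv F A e (Matrix.fromBlocks (FreeAlgebra.lift F a f) 0 0
        (algebraMap F _ f.algebraMapInv)) := by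
  refine ⟨genericSpecialize fun i => Matrix.reindexAlgEquiv F A e (.fromBlocks (a i) 0 0 0), ?_⟩
  rw [mapMatrix_genericSpecialize_genericEval, ← freeAlgebra_lift_fromBlocks_zero]
  exact (map_freeAlgebra_lift (Matrix.reindexAlgEquiv F A e).toAlgHom _ f).symm

theorem genericEval_ne_algebraMap {a : ι → Matrix p p A} {f : FreeAlgebra F ι} {c : F}
    (ha : FreeAlgebra.lift F a f ≠ algebraMap F _ c) (hpn : Fintype.card p ≤ Fintype.card n) :
    genericEval F ι n f ≠ algebraMap F _ c := by
  let e : p ⊕ Fin (Fintype.card n - Fintype.card p) ≃ n := Fintype.equivOfCardEq (by simp [hpn])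
  obtain ⟨φ, hφ⟩ := exists_mapMatrix_genericEval_eq_reindex e a f
  contrapose! ha
  rw [ha, AlgHom.commutes, ← (Matrix.reindexAlgEquiv F A e).commutes,
    (Matrix.reindexAlgEquiv F A e).injective.eq_iff] at hφ
  ext i j
  have hij := congr_fun₂ hφ (.inl i) (.inl j)
  simpa [Matrix.algebraMap_matrix_apply] using hij.symm

theorem exists_map_charpoly_genericEval {q : Type*} [Fintype q] (e : p ⊕ q ≃ n)
    (f : FreeAlgebra F ι) :
    ∃ φ : GenericEntries F ι n →ₐ[F] GenericEntries F ι p,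
      (genericEval F ι n f).charpoly.map φ.toRingHom =
        (genericEval F ι p f).charpoly * (X - C (algebraMap F _ f.algebraMapInv)) ^
          Fintype.card q := by
  classical
  obtain ⟨φ, hφ⟩ := exists_mapMatrix_genericEval_eq_reindex e (genericMatrix F p) f
  have hφ' : (genericEval F ι n f).map φ.toRingHom = _ := hφ
  refine ⟨φ, ?_⟩
  rw [← Matrix.charpoly_map, hφ', Matrix.coe_reindexAlgEquiv, Matrix.charpoly_reindex,
    Matrix.charpoly_fromBlocks_zero₁₂, Matrix.algebraMap_eq_diagonal, Matrix.charpoly_diagonal]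
  simp [genericEval]

theorem eval_charpoly_genericEval_ne_zero {G : Type*} [IsDomain F] [AddGroup G] [IsAddCyclic G]
    [Fintype G] [DecidableEq G] {f : FreeAlgebra F ι} {c : F}
    (hf : genericEval F ι G f ≠ algebraMap F _ c) :
    (genericEval F ι G f).charpoly.eval (algebraMap F _ c) ≠ 0 := by
  have hcf : genericEval F ι G (algebraMap F _ c - f) ≠ 0 := by
    rw [map_sub, AlgHom.commutes]
    exact sub_ne_zero.mpr hf.symm
  have hdet := det_genericEval_ne_zero hcf
  rw [Matrix.eval_charpoly]
  rwa [map_sub, AlgHom.commutes] at hdet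

theorem HasIndependentRoots.succ_charpoly_genericEval {Ω K : Type*} {n d : ℕ} [IsDomain F]
    {f : FreeAlgebra F ι} [CommRing Ω] [IsDomain Ω]
    [Algebra (GenericEntries F ι (Fin (n + 1))) Ω]
    [FaithfulSMul (GenericEntries F ι (Fin (n + 1))) Ω]
    [Algebra F Ω] [IsScalarTower F (GenericEntries F ι (Fin (n + 1))) Ω]
    [Field K] [IsAlgClosed K] [Algebra (GenericEntries F ι (Fin n)) K] [Algebra F K]
    [IsScalarTower F (GenericEntries F ι (Fin n)) K]
    (hf : genericEval F ι (Fin (n + 1)) f ≠ algebraMap F _ f.algebraMapInv)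
    (hs : ((genericEval F ι (Fin (n + 1)) f).charpoly.map (algebraMap _ Ω)).Splits)
    (hd : HasIndependentRoots F K (genericEval F ι (Fin n) f).charpoly d) :
    HasIndependentRoots F Ω (genericEval F ι (Fin (n + 1)) f).charpoly (d + 1) := by
  let P := (genericEval F ι (Fin (n + 1)) f).charpoly
  have hP : P.Monic := Matrix.charpoly_monic _
  have : IsAddCyclic (Fin (n + 1)) := ZMod.instIsAddCyclic (n + 1)
  obtain ⟨φ, hφ⟩ :=
    exists_map_charpoly_genericEval (finSumFinEquiv : Fin n ⊕ Fin 1 ≃ Fin (n + 1)) f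
  let ψ := (IsScalarTower.toAlgHom F (GenericEntries F ι (Fin n)) K).comp φ
  let : Algebra (GenericEntries F ι (Fin (n + 1))) K := ψ.toAlgebra
  have : IsScalarTower F (GenericEntries F ι (Fin (n + 1))) K :=
    .of_algebraMap_eq fun r => (ψ.commutes r).symm
  have hroot {y : K} : y ∈ P.rootSet K ↔ aeval y (genericEval F ι (Fin n) f).charpoly = 0 ∨
      y = algebraMap F K f.algebraMapInv := by
    have hy : aeval y P = eval₂ (algebraMap _ K) y (P.map φ.toRingHom) := by
      rw [eval₂_map]
      rfl
    rw [hP.mem_rootSet, hy, hφ, IsScalarTower.algebraMap_apply F (GenericEntries F ι (Fin n)) K]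
    simp [sub_eq_zero, aeval_def]
  obtain ⟨x, hx, hxP⟩ := hd
  exact HasIndependentRoots.succ_of_specialization hP hs
    ⟨x, hx, fun i => hroot.mpr (.inl (aeval_eq_zero_of_mem_rootSet (hxP i)))⟩
    (hroot.mpr (.inr rfl)) (eval_charpoly_genericEval_ne_zero hf)

end IndependentEigenvalues

theorem hasIndependentRoots_charpoly_genericEval {F : Type u} {ι : Type v} {p A : Type*}
    [CommRing F] [IsDomain F] [Fintype p] [DecidableEq p] [CommRing A] [Algebra F A]
    {f : FreeAlgebra F ι} {a : ι → Matrix p p A}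
    (ha : FreeAlgebra.lift F a f ≠ algebraMap F _ f.algebraMapInv) {n d : ℕ}
    (hd : d ≤ n + 1 - Fintype.card p) (Ω : Type max u v) [CommRing Ω] [IsDomain Ω]
    [Algebra (GenericEntries F ι (Fin n)) Ω] [FaithfulSMul (GenericEntries F ι (Fin n)) Ω]
    [Algebra F Ω] [IsScalarTower F (GenericEntries F ι (Fin n)) Ω]
    (hs : ((genericEval F ι (Fin n) f).charpoly.map (algebraMap _ Ω)).Splits) :
    HasIndependentRoots F Ω (genericEval F ι (Fin n) f).charpoly d := by
  induction d generalizing n Ω with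
  | zero =>
    have : FaithfulSMul F Ω := .trans F (GenericEntries F ι (Fin n)) Ω
    exact hasIndependentRoots_zero F Ω _
  | succ d ih =>
    have hp : Fintype.card p ≠ 0 := fun h0 => by
      have := Fintype.card_eq_zero_iff.mp h0
      exact ha (Subsingleton.elim _ _)
    obtain ⟨n, rfl⟩ : ∃ n', n = n' + 1 := Nat.exists_eq_succ_of_ne_zero (by lia)
    let K := AlgebraicClosure (FractionRing (GenericEntries F ι (Fin n)))
    have : FaithfulSMul (GenericEntries F ι (Fin n)) K :=
      .trans _ (FractionRing (GenericEntries F ι (Fin n))) _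
    exact .succ_charpoly_genericEval (genericEval_ne_algebraMap ha (by simp; lia)) hs
      (ih (by lia) K (IsAlgClosed.splits _))

theorem eigenvalues_algebraicallyIndependent_general {F : Type u} {ι : Type v} {A : Type*}
    [CommRing F] [IsDomain F] [CommRing A] [Algebra F A] {k n : ℕ} (f : FreeAlgebra F ι)
    (a : ι → Matrix (Fin k) (Fin k) A)
    (ha : FreeAlgebra.lift F a f ≠ algebraMap F _ f.algebraMapInv)
    {Ω : Type max u v} [CommRing Ω] [IsDomain Ω] [Algebra (GenericEntries F ι (Fin n)) Ω]
    [FaithfulSMul (GenericEntries F ι (Fin n)) Ω] [Algebra F Ω]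
    [IsScalarTower F (GenericEntries F ι (Fin n)) Ω] (α : Fin n → Ω)
    (hα : (genericEval F ι (Fin n) f).charpoly.map (algebraMap _ Ω) = ∏ i, (X - C (α i))) :
    ∃ S : Finset (Fin n), S.card = n + 1 - k ∧ AlgebraicIndependent F fun i : S => α i := by
  have hs : ((genericEval F ι (Fin n) f).charpoly.map (algebraMap _ Ω)).Splits := by
    rw [hα]
    exact .prod fun i _ => .X_sub_C _
  exact (hasIndependentRoots_charpoly_genericEval ha (by simp) Ω hs).exists_finset hα

/-- Let `F` be algebraically closed, `f` noncentral on `M_k(F)`, `n ≥ k`, and let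
`Y₁,…,Y_m` be the generic `n × n` matrices over `R = F[x^{(ℓ)}_{i,j}]`. If
`α₁,…,α_n` are the roots (with multiplicity) of the characteristic polynomial of
`f(Y₁,…,Y_m)` in an algebraic closure `Ω` of `K = Frac R`, then at least `n - k`
of the `αᵢ` are algebraically independent over `F`. -/
theorem eigenvalues_algebraicallyIndependent (F : Type) [Field F] [IsAlgClosed F]
    (m k n : ℕ) (hk : 1 ≤ k) (hkn : k ≤ n) (f : FreeAlgebra F (Fin m))
    (hnc : ∃ a : Fin m → Matrix (Fin k) (Fin k) F,
      ∀ c : F, FreeAlgebra.lift F a f ≠ c • (1 : Matrix (Fin k) (Fin k) F))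
    (α : Fin n → AlgebraicClosure (FractionRing (MvPolynomial (Fin m × Fin n × Fin n) F)))
    (hα : (Matrix.charpoly
        (FreeAlgebra.lift F (fun ℓ : Fin m =>
          (Matrix.of fun i j : Fin n => MvPolynomial.X (ℓ, i, j) :
            Matrix (Fin n) (Fin n) (MvPolynomial (Fin m × Fin n × Fin n) F))) f)).map
        (algebraMap (MvPolynomial (Fin m × Fin n × Fin n) F)
          (AlgebraicClosure (FractionRing (MvPolynomial (Fin m × Fin n × Fin n) F))))
      = ∏ i : Fin n, (Polynomial.X - Polynomial.C (α i))) :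
    ∃ S : Finset (Fin n), n - k ≤ S.card ∧
      AlgebraicIndependent F (fun i : S => α i) := by
  obtain ⟨a, ha⟩ := hnc
  have : FaithfulSMul (GenericEntries F (Fin m) (Fin n))
      (AlgebraicClosure (FractionRing (GenericEntries F (Fin m) (Fin n)))) :=
    .trans _ (FractionRing (GenericEntries F (Fin m) (Fin n))) _
  obtain ⟨S, hS, hind⟩ := eigenvalues_algebraicallyIndependent_general f a
    (by simpa only [Algebra.algebraMap_eq_smul_one] using ha _) α hα
  exact ⟨S, by lia, hind⟩
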